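/- Let (R,𝔪) be an analytically unramified Cohen–Macaulay local ring of dimension 2 with infinite residue field and I, J 𝔪-primary ideals. Then the grade of the ideal R̄'(I,J|I)₁⁺ of the extended associated graded ring R̄'(I,J|I) = ⊕_{r,s∈ℤ} (I^r J^s‾)/(I^{r+1} J^s‾) is positive, and the grade of the ideal R̄'(I,J|J)₂⁺ of R̄'(I,J|J) = ⊕_{r,s∈ℤ} (I^r J^s‾)/(I^r J^{s+1}‾) is positive. -/

import Mathlib

/-!
Let `A = extRees I J`, let `L = R[t₁^±1, t₂^±1]`, and let `S = extReesBar I J` be the integral closure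
of `A` in `L`. The ring `A` is Noetherian, and `L = A[1/d]` for the nonzerodivisor `d = u₁u₂`. The
claim for `I` asks for an element of the ideal `S₁⁺` that is a nonzerodivisor on `S / u₁S`; the claim
for `J` is the same after exchanging `t₁` and `t₂`.

A nonzerodivisor is found by prime avoidance. Since `S` need not be Noetherian, one works over `A`:
if a prime `P` of `A` is the annihilator of an element of `L / S`, then `P` is one of the finitely many
associated primes of `A / dA` (`mem_associatedPrimes_of_eq_integral_conductor`). As `u₁` is invertible
in `L`, the module `S / u₁S` is isomorphic to the `u₁`-torsion of `L / S`. Hence some `x` in the ideal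
of `A` generated by `I t₁` is regular on `S / u₁S`, provided that no nonzero element of that torsion is
killed by all of `I t₁` (`exists_regular_of_cancellation`). In other words, it remains to prove the
cancellation property: if `q ∈ L`, `u₁q ∈ S` and `I t₁ q ⊆ S`, then `q ∈ S`.

The ring `S` is bigraded (`mono_coeff_mem_extReesBar`), so `q` may be taken to be a monomial
`c t₁^r t₂^s`. If `r < 0`, then `u₁q ∈ S` already gives `q ∈ S`. If `r ≥ 0`, put `K = I^r J^s`. The
hypothesis says that `c I` is integral over `I K`, so a nonzerodivisor `e` satisfies
`e (c I)^m ⊆ (I K)^m` for all `m`. Artin-Rees applied to the filtration `e (I (K + (c)))^m` shows that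
`g c^m ∈ K^m` for all `m` and some nonzerodivisor `g` (`exists_mul_pow_mem_pow_of_cancel`), and an
element that is almost integral over a Noetherian ring is integral. Nonzerodivisors of `R` in `I J`
exist because `R` is Cohen-Macaulay of positive dimension.
-/

/-! ### Basic notions: integral closure of ideals, analytic unramifiedness,
lengths, regular sequences, Cohen-Macaulayness, primary ideals -/

/-- `x` is integral over the ideal `I`: it satisfies an equation
`x^n + a₁ x^(n-1) + ⋯ + aₙ = 0` with `aᵢ ∈ Iⁱ`. -/
def IsIntegralOverIdeal {R : Type*} [CommRing R] (I : Ideal R) (x : R) : Prop :=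
  ∃ n : ℕ, 0 < n ∧ ∃ c : ℕ → R, (∀ i, c i ∈ I ^ i) ∧
    x ^ n + ∑ i ∈ Finset.range n, c (i + 1) * x ^ (n - (i + 1)) = 0

/-- The integral closure `\overline{I}` of an ideal `I` (the set of elements integral
over `I` is an ideal, so it coincides with the ideal it spans). -/
noncomputable def intCl {R : Type*} [CommRing R] (I : Ideal R) : Ideal R :=
  Ideal.span {x | IsIntegralOverIdeal I x}

/-- A local ring is analytically unramified if its `𝔪`-adic completion is reduced. -/
def AnalyticallyUnramified (R : Type*) [CommRing R] [IsLocalRing R] : Prop :=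
  IsReduced (AdicCompletion (IsLocalRing.maximalIdeal R) R)

/-- The length `λ(M)` of a module, as the Krull dimension of its lattice of submodules. -/
noncomputable def moduleLength (R M : Type*) [Ring R] [AddCommGroup M] [Module R M] :
    WithBot ℕ∞ :=
  Order.krullDim (Submodule R M)

/-- `f` is a regular sequence on the module `M`. -/
def IsRegularSeq {R : Type*} (M : Type*) [CommRing R] [AddCommGroup M] [Module R M]
    {n : ℕ} (f : Fin n → R) : Prop :=
  (∀ i : Fin n, ∀ z : M,
      f i • z ∈ Ideal.span (f '' {j | j < i}) • (⊤ : Submodule R M) →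
      z ∈ Ideal.span (f '' {j | j < i}) • (⊤ : Submodule R M)) ∧
  Ideal.span (Set.range f) • (⊤ : Submodule R M) ≠ ⊤

/-- A local ring is Cohen-Macaulay if there is a regular sequence of length
`dim` inside the maximal ideal. -/
def IsCMLocalRing (A : Type*) [CommRing A] [IsLocalRing A] : Prop :=
  ∃ (n : ℕ) (f : Fin n → A), (∀ i, f i ∈ IsLocalRing.maximalIdeal A) ∧
    IsRegularSeq A f ∧ (n : WithBot ℕ∞) = ringKrullDim A

/-- A commutative ring is Cohen-Macaulay if all its localizations at primes are. -/
def IsCMRing (A : Type*) [CommRing A] : Prop :=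
  ∀ (P : Ideal A) (_ : P.IsPrime), IsCMLocalRing (Localization.AtPrime P)

/-- An ideal of a local ring is `𝔪`-primary if its radical is the maximal ideal. -/
def IsMPrimary {R : Type*} [CommRing R] [IsLocalRing R] (I : Ideal R) : Prop :=
  I.radical = IsLocalRing.maximalIdeal R

/-- `I^r J^s` for `r s : ℤ`, with the convention that nonpositive powers give the
unit ideal. -/
noncomputable def IJ {R : Type*} [CommRing R] (I J : Ideal R) (r s : ℤ) : Ideal R :=
  I ^ r.toNat * J ^ s.toNat

/-- `\overline{I^r J^s}` for `r s : ℤ`. -/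
noncomputable def IJbar {R : Type*} [CommRing R] (I J : Ideal R) (r s : ℤ) : Ideal R :=
  intCl (IJ I J r s)

/-- A good joint reduction `(a,b)` of the filtration `{\overline{I^r J^s}}`:
a joint reduction such that moreover `(a) ∩ \overline{I^r J^s} = a ⬝ \overline{I^{r-1} J^s}`
for all `s` and all `r > 0`, and symmetrically for `b`. -/
def IsGoodJointReduction {R : Type*} [CommRing R] (I J : Ideal R) (a b : R) : Prop :=
  a ∈ I ∧ b ∈ J ∧
  (∃ N : ℤ, ∀ r s : ℤ, N ≤ r → N ≤ s →
      IJbar I J r s =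
        Ideal.span {a} * IJbar I J (r - 1) s ⊔ Ideal.span {b} * IJbar I J r (s - 1)) ∧
  (∀ r s : ℤ, 0 < r →
      Ideal.span {a} ⊓ IJbar I J r s = Ideal.span {a} * IJbar I J (r - 1) s) ∧
  (∀ r s : ℤ, 0 < s →
      Ideal.span {b} ⊓ IJbar I J r s = Ideal.span {b} * IJbar I J r (s - 1))
/-! ### The bigraded extended Rees ring of the filtration `{\overline{I^r J^s}}` -/

/-- The Laurent polynomial ring `R[t₁,t₂,t₁⁻¹,t₂⁻¹]` in two variables over `R`. -/
abbrev Amb (R : Type*) [CommRing R] := AddMonoidAlgebra R (ℤ × ℤ)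

/-- The monomial `c t₁^r t₂^s`. -/
noncomputable def mono {R : Type*} [CommRing R] (r s : ℤ) (c : R) : Amb R :=
  AddMonoidAlgebra.single (r, s) c

/-- Generators of the extended bigraded Rees ring: `I t₁`, `J t₂`, `u₁ = t₁⁻¹` and
`u₂ = t₂⁻¹`. -/
def extReesGens {R : Type*} [CommRing R] (I J : Ideal R) : Set (Amb R) :=
  {x | ∃ a ∈ I, x = mono 1 0 a} ∪ {x | ∃ b ∈ J, x = mono 0 1 b} ∪
    {mono (-1) 0 1, mono 0 (-1) 1}

/-- The extended bigraded Rees ring `𝓡'(I,J) = ⊕_{r,s ∈ ℤ} I^r J^s t₁^r t₂^s`. -/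
noncomputable def extRees {R : Type*} [CommRing R] (I J : Ideal R) : Subalgebra R (Amb R) :=
  Algebra.adjoin R (extReesGens I J)

/-- The extended bigraded Rees ring `\overline{𝓡'}(I,J) = ⊕_{r,s ∈ ℤ}
\overline{I^r J^s} t₁^r t₂^s` of the filtration of integral closures; by the theorem on
integral closures of graded rings it is the integral closure of `𝓡'(I,J)` in
`R[t₁,t₂,t₁⁻¹,t₂⁻¹]`. -/
noncomputable def extReesBar {R : Type*} [CommRing R] (I J : Ideal R) :
    Subalgebra R (Amb R) :=
  (integralClosure (extRees I J) (Amb R)).restrictScalars R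

lemma mem_extReesBar_of_mem_extRees {R : Type*} [CommRing R] {I J : Ideal R} {x : Amb R}
    (hx : x ∈ extRees I J) : x ∈ extReesBar I J := by
  have : IsIntegral (extRees I J) x := by
    have := isIntegral_algebraMap (R := ↥(extRees I J)) (A := Amb R) (x := ⟨x, hx⟩)
    simpa using this
  exact this

/-- `u₁ = t₁⁻¹` belongs to the extended Rees ring. -/
lemma u1_mem {R : Type*} [CommRing R] (I J : Ideal R) :
    mono (-1) 0 (1 : R) ∈ extReesBar I J :=
  mem_extReesBar_of_mem_extRees <| Algebra.subset_adjoin <| Or.inr <| Or.inl rfl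

/-- `u₂ = t₂⁻¹` belongs to the extended Rees ring. -/
lemma u2_mem {R : Type*} [CommRing R] (I J : Ideal R) :
    mono 0 (-1) (1 : R) ∈ extReesBar I J :=
  mem_extReesBar_of_mem_extRees <| Algebra.subset_adjoin <| Or.inr <| Or.inr rfl

/-- For a bigraded subring `B` of `R[t₁^{±1}, t₂^{±1}]`, the ideal `B₁⁺` generated by all
homogeneous elements of degree `(r,s)` with `r ≥ 1`. -/
noncomputable def plusIdeal1 {R : Type*} [CommRing R] (S : Subalgebra R (Amb R)) :
    Ideal ↥S :=
  Ideal.span {x : ↥S | ∃ r s : ℤ, 1 ≤ r ∧ ∃ c : R, (x : Amb R) = mono r s c}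

/-- For a bigraded subring `B` of `R[t₁^{±1}, t₂^{±1}]`, the ideal `B₂⁺` generated by all
homogeneous elements of degree `(r,s)` with `s ≥ 1`. -/
noncomputable def plusIdeal2 {R : Type*} [CommRing R] (S : Subalgebra R (Amb R)) :
    Ideal ↥S :=
  Ideal.span {x : ↥S | ∃ r s : ℤ, 1 ≤ s ∧ ∃ c : R, (x : Amb R) = mono r s c}

/-- The extended associated graded ring
`\overline{𝓡'}(I,J|I) = ⊕_{r,s} \overline{I^r J^s}/\overline{I^{r+1} J^s}`,
realized as `\overline{𝓡'}(I,J)/(u₁)`. -/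
noncomputable abbrev extAssocGradedI {R : Type*} [CommRing R] (I J : Ideal R) :=
  ↥(extReesBar I J) ⧸ Ideal.span {(⟨mono (-1) 0 1, u1_mem I J⟩ : ↥(extReesBar I J))}

/-- The extended associated graded ring
`\overline{𝓡'}(I,J|J) = ⊕_{r,s} \overline{I^r J^s}/\overline{I^r J^{s+1}}`,
realized as `\overline{𝓡'}(I,J)/(u₂)`. -/
noncomputable abbrev extAssocGradedJ {R : Type*} [CommRing R] (I J : Ideal R) :=
  ↥(extReesBar I J) ⧸ Ideal.span {(⟨mono 0 (-1) 1, u2_mem I J⟩ : ↥(extReesBar I J))}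

/-! ### Integral closure in a localization of a Noetherian ring -/

/-- Almost integrality implies integrality over a Noetherian ring, up to multiplication by an element
of a multiplicative set `M`: if all `d w ^ m` can be moved into `A` by elements of `M`, then `y • w`
is integral over `A` for some `y ∈ M`. -/
theorem exists_isIntegral_smul_of_smul_mul_pow_mem {A L : Type*} [CommRing A] [CommRing L]
    [Algebra A L] [IsNoetherianRing A] (M : Submonoid A) {d w : L} (hd : d ∈ nonZeroDivisors L)
    (h : ∀ m : ℕ, ∃ y ∈ M, y • (d * w ^ m) ∈ (algebraMap A L).range) :
    ∃ y ∈ M, IsIntegral A (y • w) := by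
  choose y hy e he using h
  -- Noetherianity makes one of the `e k` a combination of the earlier ones.
  obtain ⟨k, hk⟩ := monotone_stabilizes_iff_noetherian.mpr ‹IsNoetherianRing A›
    ⟨fun k => Ideal.span (e '' Set.Iio k), fun a b hab =>
      Ideal.span_mono (Set.image_mono (Set.Iio_subset_Iio hab))⟩
  have hek : e k ∈ Ideal.span (e '' Set.Iio k) := by
    have h1 := hk (k + 1) (Nat.le_succ k)
    change Ideal.span (e '' Set.Iio k) = Ideal.span (e '' Set.Iio (k + 1)) at h1
    rw [h1]
    exact Ideal.subset_span ⟨k, by simp, rfl⟩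
  have hfin : e '' Set.Iio k = (fun i => e i) '' (Finset.range k : Set ℕ) := by
    simp [Finset.coe_range]
  rw [hfin, Ideal.span, Submodule.mem_span_image_finset_iff_exists_fun'] at hek
  obtain ⟨a, ha⟩ := hek
  refine ⟨y k, hy k, ?_⟩
  by_cases hy0 : y k = 0
  · simpa [hy0] using (isIntegral_zero : IsIntegral A (0 : L))
  have hw : y k • w ^ k = ∑ i ∈ Finset.range k, (a i * y i) • w ^ i := by
    have h1 := congrArg (algebraMap A L) ha
    rw [he, map_sum] at h1
    have h2 : d * (∑ i ∈ Finset.range k, (a i * y i) • w ^ i) = d * (y k • w ^ k) := by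
      rw [mul_smul_comm, ← h1, Finset.mul_sum]
      refine Finset.sum_congr rfl fun i _ => ?_
      rw [smul_eq_mul, map_mul, he]
      simp only [Algebra.smul_def, map_mul]
      ring
    exact ((mul_cancel_left_mem_nonZeroDivisors hd).mp h2).symm
  let q : Polynomial A := ∑ i ∈ Finset.range k, Polynomial.monomial i (a i * y i)
  let p : Polynomial A := Polynomial.monomial k (y k) - q
  have hq : q.degree < k := by
    refine (Polynomial.degree_sum_le _ _).trans_lt ?_
    refine (Finset.sup_lt_iff (WithBot.bot_lt_coe k)).mpr fun i hi => ?_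
    exact (Polynomial.degree_monomial_le _ _).trans_lt
      (WithBot.coe_lt_coe.mpr (Finset.mem_range.mp hi))
  have hp : p.leadingCoeff = y k := by
    have : q.degree < (Polynomial.monomial k (y k)).degree := by
      rwa [Polynomial.degree_monomial _ hy0]
    rw [Polynomial.leadingCoeff_sub_of_degree_lt this, Polynomial.leadingCoeff_monomial]
  rw [← hp]
  apply isIntegral_leadingCoeff_smul
  simp only [p, q, map_sub, map_sum, Polynomial.aeval_monomial, ← Algebra.smul_def, hw, sub_self]

theorem isIntegral_of_mul_pow_mem {A L : Type*} [CommRing A] [CommRing L]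
    [Algebra A L] [IsNoetherianRing A] {d w : L} (hd : d ∈ nonZeroDivisors L)
    (h : ∀ m : ℕ, d * w ^ m ∈ (algebraMap A L).range) : IsIntegral A w := by
  obtain ⟨y, hy, hi⟩ := exists_isIntegral_smul_of_smul_mul_pow_mem (A := A) (⊥ : Submonoid A) hd
    (fun m => ⟨1, Submonoid.mem_bot.mpr rfl, by simpa using h m⟩)
  rw [Submonoid.mem_bot] at hy
  simpa [hy] using hi

/-- If `L = A[1/d]`, then a finitely generated algebra of integral elements of `L` has a common
denominator `d ^ N`, because it is a finite module. -/
theorem exists_pow_mul_mem_range_of_mem_adjoin {A L : Type*} [CommRing A] [CommRing L]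
    [Algebra A L] (d : A) (hL : ∀ z : L, ∃ N : ℕ, algebraMap A L d ^ N * z ∈ (algebraMap A L).range)
    {s : Set L} (hs : s.Finite) (hi : ∀ z ∈ s, IsIntegral A z) :
    ∃ N : ℕ, ∀ z ∈ Algebra.adjoin A s, algebraMap A L d ^ N * z ∈ (algebraMap A L).range := by
  obtain ⟨T, hT⟩ := fg_adjoin_of_finite hs hi
  choose f hf using hL
  refine ⟨T.sup f, fun z hz => ?_⟩
  rw [← Subalgebra.mem_toSubmodule, ← hT] at hz
  induction hz using Submodule.span_induction with
  | mem x hx =>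
    obtain ⟨k, hk⟩ := Nat.exists_eq_add_of_le (Finset.le_sup (f := f) hx)
    rw [hk, pow_add, mul_comm (_ ^ _), mul_assoc]
    exact mul_mem ⟨d ^ k, by simp⟩ (hf x)
  | zero => simp
  | add x y _ _ hx hy => rw [mul_add]; exact add_mem hx hy
  | smul a x _ hx =>
    rw [mul_smul_comm, Algebra.smul_def]
    exact mul_mem ⟨a, rfl⟩ hx

/-- Let `L = A[1/d]`. A prime of `A` that is the annihilator of an element `w` of `L` modulo the integral
closure of `A` is associated to `A / dA`. Otherwise `P` would not be associated to `L / A`, hence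
not minimal over the annihilator of `d ^ N w ^ m` modulo `A`; for a suitable `N` this annihilator
has `P` in its radical, so some `y ∉ P` moves `d ^ N w ^ m` into `A`, and then some `y • w` with
`y ∉ P` is integral. -/
theorem mem_associatedPrimes_of_eq_integral_conductor {A L : Type*} [CommRing A] [CommRing L]
    [Algebra A L] [IsNoetherianRing A] (hinj : Function.Injective (algebraMap A L)) (d : A)
    (hd : algebraMap A L d ∈ nonZeroDivisors L)
    (hL : ∀ z : L, ∃ N : ℕ, algebraMap A L d ^ N * z ∈ (algebraMap A L).range)
    (P : Ideal A) [hP : P.IsPrime] (w : L) (hPw : ∀ a : A, a ∈ P ↔ IsIntegral A (a • w)) :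
    P ∈ associatedPrimes A (A ⧸ Ideal.span {d}) := by
  let B : Submodule A L := LinearMap.range (Algebra.linearMap A L)
  have hB : ∀ z : L, z ∈ B ↔ z ∈ (algebraMap A L).range := fun z => Iff.rfl
  -- It suffices that `P` is the annihilator of the class of some `q` in `L / A`.
  suffices hq : ∃ q : L, P = B.colon {q} by
    obtain ⟨q, hq⟩ := hq
    have hqB : q ∉ B := fun h => hP.ne_top <| by
      rw [hq, Ideal.eq_top_iff_one, Submodule.mem_colon_singleton, one_smul]; exact h
    obtain ⟨K, hK, hmin⟩ : ∃ K : ℕ, d ^ (K + 1) • q ∈ B ∧ d ^ K • q ∉ B := by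
      by_contra! hcon
      obtain ⟨N, hN⟩ := hL q
      have hN' : d ^ N • q ∈ B := by rwa [hB, Algebra.smul_def, map_pow]
      have : ∀ K, d ^ K • q ∉ B := by
        intro K
        induction K with
        | zero => simpa using hqB
        | succ K ih => exact fun h => ih (hcon K h)
      exact this N hN'
    have hdK : d ^ K ∉ P := by
      rw [hq, Submodule.mem_colon_singleton]; exact hmin
    obtain ⟨c, hc⟩ := hK
    rw [Algebra.linearMap_apply] at hc
    refine (isAssociatedPrime_iff).mpr ⟨hP, Ideal.Quotient.mk _ c, ?_⟩
    ext x
    rw [Submodule.mem_colon_singleton, Submodule.mem_bot, ← Ideal.Quotient.mk_eq_mk,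
      ← Submodule.Quotient.mk_smul, Submodule.Quotient.mk_eq_zero, Ideal.mem_span_singleton']
    have h1 : x ∈ P ↔ x * d ^ K ∈ P :=
      ⟨fun h => P.mul_mem_right _ h, fun h => (hP.mem_or_mem h).resolve_right hdK⟩
    rw [h1, hq, Submodule.mem_colon_singleton]
    constructor
    · rintro ⟨a, ha⟩
      refine ⟨a, hinj ?_⟩
      rw [Algebra.linearMap_apply] at ha
      rw [map_mul, ha, smul_eq_mul, map_mul, hc]
      simp only [Algebra.smul_def, map_mul, map_pow]
      ring
    · rintro ⟨a, ha⟩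
      refine ⟨a, ?_⟩
      rw [Algebra.linearMap_apply]
      rw [← mul_cancel_left_mem_nonZeroDivisors hd]
      have h2 := congrArg (algebraMap A L) ha
      rw [map_mul, smul_eq_mul, map_mul, hc] at h2
      rw [mul_comm, h2]
      simp only [Algebra.smul_def, map_mul, map_pow]
      ring
  by_contra! hcon
  obtain ⟨s, hs⟩ := IsNoetherian.noetherian P
  -- `d ^ N` is a common denominator of the powers of `p • w` as `p` runs over generators of `P`.
  obtain ⟨N, hN⟩ := exists_pow_mul_mem_range_of_mem_adjoin (A := A) (L := L) d hL
    (s := (fun p : A => p • w) '' s) (s.finite_toSet.image _) (by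
      rintro _ ⟨p, hp, rfl⟩
      exact (hPw p).mp (hs ▸ Submodule.subset_span hp))
  have key : ∀ m : ℕ, ∃ y ∈ P.primeCompl,
      y • (algebraMap A L d ^ N * w ^ m) ∈ (algebraMap A L).range := by
    intro m
    by_contra! hno
    set x : L := algebraMap A L d ^ N * w ^ m with hx
    have hle : B.colon {x} ≤ P := by
      intro y hy
      by_contra hyP
      exact hno y hyP (by rwa [Submodule.mem_colon_singleton] at hy)
    have hrad : P ≤ (B.colon {x}).radical := by
      rw [← hs]
      refine Submodule.span_le.mpr fun p hp => ⟨m, ?_⟩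
      rw [Submodule.mem_colon_singleton, hB]
      have h1 := hN ((p • w) ^ m) (pow_mem (Algebra.subset_adjoin (Set.mem_image_of_mem _ hp)) m)
      convert h1 using 1
      simp only [hx, Algebra.smul_def, map_pow]
      ring
    have hmin : P ∈ (B.colon {x}).minimalPrimes :=
      ⟨⟨hP, hle⟩, fun Q hQ _ => hrad.trans (hQ.1.radical_le_iff.mpr hQ.2)⟩
    obtain ⟨q, hq⟩ := Submodule.exists_eq_colon_of_mem_minimalPrimes hmin
    exact hcon q hq
  obtain ⟨y, hy, hyi⟩ := exists_isIntegral_smul_of_smul_mul_pow_mem P.primeCompl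
    (pow_mem hd N) key
  exact hy ((hPw y).mpr hyi)

/-- Prime avoidance. If elements of `L` that `u` and all of `G` multiply into the integral closure `S`
of `A` lie in `S`, then a single `x` in the ideal generated by `G` can replace `G`. Only finitely
many primes have to be avoided, by `mem_associatedPrimes_of_eq_integral_conductor`. -/
theorem exists_regular_of_cancellation {A L : Type*} [CommRing A] [CommRing L]
    [Algebra A L] [IsNoetherianRing A] (hinj : Function.Injective (algebraMap A L)) (d : A)
    (hd : algebraMap A L d ∈ nonZeroDivisors L)
    (hL : ∀ z : L, ∃ N : ℕ, algebraMap A L d ^ N * z ∈ (algebraMap A L).range)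
    (u : A) (G : Set A)
    (hG : ∀ q : L, IsIntegral A (u • q) → (∀ g ∈ G, IsIntegral A (g • q)) → IsIntegral A q) :
    ∃ x ∈ Ideal.span G, ∀ q : L, IsIntegral A (u • q) → IsIntegral A (x • q) → IsIntegral A q := by
  classical
  have hfin := associatedPrimes.finite A (A ⧸ Ideal.span {d})
  let F : Finset (Ideal A) := hfin.toFinset.filter fun P => ¬ Ideal.span G ≤ P
  have hF : ∀ P, P ∈ F ↔ P ∈ associatedPrimes A (A ⧸ Ideal.span {d}) ∧ ¬ Ideal.span G ≤ P := by
    intro P; simp [F]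
  obtain ⟨x, hxG, hxF⟩ : ∃ x ∈ Ideal.span G, ∀ P ∈ F, x ∉ P := by
    by_contra! hcon
    obtain ⟨P, hP, hle⟩ := (Ideal.subset_union_prime (s := F) (f := fun P => P) ⊤ ⊤
      (fun P hP _ _ => ((hF P).mp hP).1.isPrime)).mp (fun x hx => by
        obtain ⟨P, hP, hxP⟩ := hcon x hx
        exact Set.mem_biUnion hP hxP)
    exact ((hF P).mp hP).2 hle
  refine ⟨x, hxG, fun q huq hxq => ?_⟩
  by_contra hq
  let S : Submodule A L := Subalgebra.toSubmodule (integralClosure A L)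
  have hS : ∀ z, z ∈ S ↔ IsIntegral A z := fun z => Iff.rfl
  let T : Submodule A (L ⧸ S) := Submodule.torsionBy A (L ⧸ S) u
  have hmk : ∀ (a : A) (z : L), a • (Submodule.Quotient.mk z : L ⧸ S) = 0 ↔ IsIntegral A (a • z) := by
    intro a z
    rw [← Submodule.Quotient.mk_smul, Submodule.Quotient.mk_eq_zero, hS]
  have hqT : (Submodule.Quotient.mk q : L ⧸ S) ∈ T := by
    rw [Submodule.mem_torsionBy_iff, hmk]; exact huq
  obtain ⟨P, hPass, hPle⟩ := exists_le_isAssociatedPrime_of_isNoetherianRing A (⟨_, hqT⟩ : T) (by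
    rw [Ne, Subtype.ext_iff, Submodule.coe_zero, Submodule.Quotient.mk_eq_zero, hS]; exact hq)
  obtain ⟨hP, ⟨t, ht⟩, hPt⟩ := isAssociatedPrime_iff.mp hPass
  obtain ⟨w, rfl⟩ := Submodule.Quotient.mk_surjective S t
  have hPw : ∀ a : A, a ∈ P ↔ IsIntegral A (a • w) := by
    intro a
    rw [hPt, Submodule.mem_colon_singleton, Submodule.mem_bot, ← hmk, Subtype.ext_iff]
    rfl
  have hPd := mem_associatedPrimes_of_eq_integral_conductor hinj d hd hL P w hPw
  have hxP : x ∈ P := hPle <| by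
    rw [Submodule.mem_colon_singleton, Submodule.mem_bot, Subtype.ext_iff]
    exact (hmk x q).mpr hxq
  have hGP : Ideal.span G ≤ P := by
    by_contra hno
    exact hxF P ((hF P).mpr ⟨hPd, hno⟩) hxP
  have huw : IsIntegral A (u • w) := by
    rwa [Submodule.mem_torsionBy_iff, hmk] at ht
  have hw := hG w huw fun g hg => (hPw g).mp (hGP (Ideal.subset_span hg))
  exact hP.ne_top ((Ideal.eq_top_iff_one _).mpr ((hPw 1).mpr (by simpa using hw)))

/-! ### Cancellation of ideals -/

/-- Cancellation of `I`: if `c I` is almost integral over `I K`, then `c` is almost integral over `K`.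
With `K' = K + (c)`, Artin-Rees gives `I K (I K')^n = (I K')^(n+1)` for some `n`, so that
`M = I^(n+1) K'^n` satisfies `c^m M ⊆ K^m M` for all `m`, and any nonzerodivisor of `M` serves as `g`. -/
theorem exists_mul_pow_mem_pow_of_cancel {R : Type*} [CommRing R] [IsNoetherianRing R]
    (I K : Ideal R) {c e f : R} (he : e ∈ nonZeroDivisors R) (hf : f ∈ nonZeroDivisors R)
    (hfI : f ∈ I) (hfK : ∃ k, f ^ k ∈ K)
    (h : ∀ m : ℕ, ∀ b ∈ I ^ m, e * (b * c ^ m) ∈ (I * K) ^ m) :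
    ∃ g ∈ nonZeroDivisors R, ∀ m : ℕ, g * c ^ m ∈ K ^ m := by
  let K' : Ideal R := K ⊔ Ideal.span {c}
  have hC : ∀ m, Ideal.span {e} * (I * K') ^ m ≤ (I * K) ^ m := by
    intro m
    have hcm : ∀ i, Ideal.span {e} * (I * Ideal.span {c}) ^ i ≤ (I * K) ^ i := by
      intro i
      rw [mul_pow, Ideal.span_singleton_pow, mul_comm (I ^ i)]
      intro z hz
      rw [Ideal.mem_span_singleton_mul] at hz
      obtain ⟨z, hz, rfl⟩ := hz
      rw [Ideal.mem_span_singleton_mul] at hz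
      obtain ⟨b, hb, rfl⟩ := hz
      rw [mul_comm (c ^ i)]
      exact h i b hb
    have : I * K' = I * K ⊔ I * Ideal.span {c} := Ideal.mul_sup _ _ _
    rw [this, ← Submodule.add_eq_sup, add_pow, Finset.mul_sum]
    rw [Ideal.sum_eq_sup]
    refine Finset.sup_le fun i hi => ?_
    calc _ ≤ Ideal.span {e} * ((I * K) ^ i * (I * Ideal.span {c}) ^ (m - i)) := by
            exact Ideal.mul_mono_right Ideal.mul_le_left
      _ = (I * K) ^ i * (Ideal.span {e} * (I * Ideal.span {c}) ^ (m - i)) := by ring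
      _ ≤ (I * K) ^ i * (I * K) ^ (m - i) := Ideal.mul_mono_right (hcm _)
      _ = (I * K) ^ m := by
            rw [← pow_add, Nat.add_sub_cancel' (by simpa [Nat.lt_succ_iff] using hi)]
  -- Artin-Rees: `e (I K')^m` is a stable `I K`-filtration.
  let F : (I * K).Filtration R :=
    { N := fun m => Ideal.span {e} * (I * K') ^ m
      mono := fun m => Ideal.mul_mono_right (Ideal.pow_le_pow_right (Nat.le_succ m))
      smul_le := fun m => by
        rw [smul_eq_mul, pow_succ, mul_left_comm, mul_comm _ (I * K')]
        exact Ideal.mul_mono_right (Ideal.mul_mono_left (Ideal.mul_mono_right le_sup_left)) }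
  have hstab : F.Stable := by
    refine ((I * K).stableFiltration_stable (⊤ : Ideal R)).of_le fun m => ?_
    simpa [F] using hC m
  obtain ⟨n, hn⟩ := hstab
  have hn' : (I * K) * (I * K') ^ n = (I * K') ^ (n + 1) := by
    have h1 : (I * K) * (Ideal.span {e} * (I * K') ^ n) = Ideal.span {e} * (I * K') ^ (n + 1) :=
      hn n le_rfl
    rw [mul_left_comm] at h1
    refine le_antisymm ?_ ?_ <;> intro z hz
    · have h2 : e * z ∈ Ideal.span {e} * (I * K') ^ (n + 1) :=
        h1 ▸ Ideal.mul_mem_mul (Ideal.mem_span_singleton_self e) hz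
      obtain ⟨z', hz', h3⟩ := Ideal.mem_span_singleton_mul.mp h2
      rwa [(mul_cancel_left_mem_nonZeroDivisors he).mp h3] at hz'
    · have h2 : e * z ∈ Ideal.span {e} * (I * K * (I * K') ^ n) :=
        h1 ▸ Ideal.mul_mem_mul (Ideal.mem_span_singleton_self e) hz
      obtain ⟨z', hz', h3⟩ := Ideal.mem_span_singleton_mul.mp h2
      rwa [(mul_cancel_left_mem_nonZeroDivisors he).mp h3] at hz'
  let M : Ideal R := I ^ (n + 1) * K' ^ n
  have hM : ∀ z ∈ M, ∀ m, c ^ m * z ∈ K ^ m * M := by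
    have hKM : K' * M = K * M := by
      have : K' * M = (I * K') ^ (n + 1) := by simp only [M]; ring
      rw [this, ← hn']; simp only [M]; ring
    have hpow : ∀ m, K' ^ m * M = K ^ m * M := by
      intro m
      induction m with
      | zero => simp
      | succ m ih => rw [pow_succ, mul_assoc, hKM, mul_left_comm, ih, pow_succ]; ring
    intro z hz m
    rw [← hpow]
    exact Ideal.mul_mem_mul (Ideal.pow_mem_pow
      (Ideal.mem_sup_right (Ideal.mem_span_singleton_self c)) m) hz
  obtain ⟨k, hk⟩ := hfK
  refine ⟨f ^ (n + 1) * (f ^ k) ^ n, mul_mem (pow_mem hf _) (pow_mem (pow_mem hf _) _),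
    fun m => ?_⟩
  have := hM _ (Ideal.mul_mem_mul (Ideal.pow_mem_pow hfI (n + 1))
    (Ideal.pow_mem_pow (Ideal.mem_sup_left hk) n)) m
  rw [mul_comm]
  exact Ideal.mul_le_left this

/-! ### Monomials and the extended Rees ring -/

section Concrete

variable {R : Type*} [CommRing R]

theorem mono_mul (r s r' s' : ℤ) (a b : R) :
    mono r s a * mono r' s' b = mono (r + r') (s + s') (a * b) := by
  simp [mono, AddMonoidAlgebra.single_mul_single]

theorem mono_pow (r s : ℤ) (a : R) (m : ℕ) : mono r s a ^ m = mono (m * r) (m * s) (a ^ m) := by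
  simp [mono, AddMonoidAlgebra.single_pow]

theorem mono_add (r s : ℤ) (a b : R) : mono r s (a + b) = mono r s a + mono r s b := by
  simp [mono, AddMonoidAlgebra.single_add]

theorem mono_zero (r s : ℤ) : mono r s (0 : R) = 0 := by
  simp [mono]

theorem mono_coeff_self (r s : ℤ) (a : R) : (mono r s a).coeff (r, s) = a := by
  simp [mono]

theorem coeff_mono_mul (r s : ℤ) (a : R) (f : Amb R) (r' s' : ℤ) :
    (mono r s a * f).coeff (r + r', s + s') = a * f.coeff (r', s') := by
  simp [mono, AddMonoidAlgebra.coeff_single_mul_apply]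

theorem IJ_mul_le (I J : Ideal R) (r s r' s' : ℤ) :
    IJ I J r s * IJ I J r' s' ≤ IJ I J (r + r') (s + s') := by
  unfold IJ
  calc _ = I ^ (r.toNat + r'.toNat) * J ^ (s.toNat + s'.toNat) := by ring
    _ ≤ _ := Ideal.mul_mono (Ideal.pow_le_pow_right (by omega)) (Ideal.pow_le_pow_right (by omega))

theorem IJ_anti (I J : Ideal R) {r s r' s' : ℤ} (h : r.toNat ≤ r'.toNat) (h' : s.toNat ≤ s'.toNat) :
    IJ I J r' s' ≤ IJ I J r s :=
  Ideal.mul_mono (Ideal.pow_le_pow_right h) (Ideal.pow_le_pow_right h')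

theorem IJ_nat_mul (I J : Ideal R) (r s : ℤ) (m : ℕ) :
    IJ I J (m * r) (m * s) = IJ I J r s ^ m := by
  have h : ∀ x : ℤ, ((m : ℤ) * x).toNat = x.toNat * m := by
    intro x
    rcases le_total 0 x with hx | hx
    · obtain ⟨n, rfl⟩ := Int.eq_ofNat_of_zero_le hx
      rw [← Int.natCast_mul, Int.toNat_natCast, Int.toNat_natCast, mul_comm]
    · rw [Int.toNat_of_nonpos hx, Int.toNat_of_nonpos, zero_mul]
      exact mul_nonpos_of_nonneg_of_nonpos (by positivity) hx
  simp only [IJ, h, mul_pow, pow_mul]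

theorem IJ_swap (I J : Ideal R) (r s : ℤ) : IJ I J r s = IJ J I s r := mul_comm _ _

theorem mono_mem_extRees {I J : Ideal R} {r s : ℤ} {c : R} (hc : c ∈ IJ I J r s) :
    mono r s c ∈ extRees I J := by
  have hI : ∀ b ∈ I, mono 1 0 b ∈ extRees I J := fun b hb =>
    Algebra.subset_adjoin (Or.inl (Or.inl ⟨b, hb, rfl⟩))
  have hJ : ∀ b ∈ J, mono 0 1 b ∈ extRees I J := fun b hb =>
    Algebra.subset_adjoin (Or.inl (Or.inr ⟨b, hb, rfl⟩))
  have h1 : mono (-1) 0 (1 : R) ∈ extRees I J := Algebra.subset_adjoin (Or.inr (Or.inl rfl))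
  have h2 : mono 0 (-1) (1 : R) ∈ extRees I J := Algebra.subset_adjoin (Or.inr (Or.inr rfl))
  have h0 : ∀ a : R, mono 0 0 a ∈ extRees I J := fun a => (extRees I J).algebraMap_mem a
  have hIn : ∀ (n : ℕ), ∀ b ∈ I ^ n, mono n 0 b ∈ extRees I J := by
    intro n
    induction n with
    | zero => intro b _; exact h0 b
    | succ n ih =>
      intro b hb
      rw [pow_succ] at hb
      induction hb using Submodule.mul_induction_on' with
      | mem_mul_mem x hx y hy =>
        have := mul_mem (ih x hx) (hI y hy)
        rw [mono_mul] at this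
        simpa using this
      | add x _ y _ hx hy => rw [mono_add]; exact add_mem hx hy
  have hJn : ∀ (n : ℕ), ∀ b ∈ J ^ n, mono 0 n b ∈ extRees I J := by
    intro n
    induction n with
    | zero => intro b _; exact h0 b
    | succ n ih =>
      intro b hb
      rw [pow_succ] at hb
      induction hb using Submodule.mul_induction_on' with
      | mem_mul_mem x hx y hy =>
        have := mul_mem (ih x hx) (hJ y hy)
        rw [mono_mul] at this
        simpa using this
      | add x _ y _ hx hy => rw [mono_add]; exact add_mem hx hy
  have key : mono r.toNat s.toNat c ∈ extRees I J := by
    unfold IJ at hc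
    induction hc using Submodule.mul_induction_on' with
    | mem_mul_mem x hx y hy =>
      have := mul_mem (hIn _ x hx) (hJn _ y hy)
      rw [mono_mul] at this
      simpa using this
    | add x _ y _ hx hy => rw [mono_add]; exact add_mem hx hy
  have := mul_mem (mul_mem (pow_mem h1 (-r).toNat) (pow_mem h2 (-s).toNat)) key
  rw [mono_pow, mono_pow, mono_mul, mono_mul] at this
  convert this using 1
  congr 1
  · rw [mul_zero]; omega
  · rw [mul_zero]; omega
  · simp

theorem amb_eq_sum (f : Amb R) : f = ∑ p ∈ f.coeff.support, mono p.1 p.2 (f.coeff p) :=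
  (AddMonoidAlgebra.sum_coeff_single f).symm

/-- The extended Rees ring, defined by generators, is `⊕ I^r J^s t₁^r t₂^s`. -/
theorem mem_extRees_iff {I J : Ideal R} {f : Amb R} :
    f ∈ extRees I J ↔ ∀ r s : ℤ, f.coeff (r, s) ∈ IJ I J r s := by
  classical
  constructor
  · intro hf
    have hmono : ∀ (r s : ℤ) (c : R), c ∈ IJ I J r s →
        ∀ r' s' : ℤ, (mono r s c).coeff (r', s') ∈ IJ I J r' s' := by
      intro r s c hc r' s'
      rw [mono, AddMonoidAlgebra.coeff_single, Finsupp.single_apply]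
      split_ifs with h
      · rw [Prod.mk.injEq] at h; rwa [← h.1, ← h.2]
      · exact zero_mem _
    induction hf using Algebra.adjoin_induction with
    | mem x hx =>
      rcases hx with (⟨a, ha, rfl⟩ | ⟨b, hb, rfl⟩) | rfl | rfl
      · exact hmono _ _ _ (by simpa [IJ] using ha)
      · exact hmono _ _ _ (by simpa [IJ] using hb)
      · exact hmono _ _ _ (by simp [IJ])
      · exact hmono _ _ _ (by simp [IJ])
    | algebraMap a => exact hmono 0 0 a (by simp [IJ])
    | add x y _ _ hx hy =>
      intro r s
      rw [AddMonoidAlgebra.coeff_add, Finsupp.add_apply]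
      exact add_mem (hx r s) (hy r s)
    | mul x y _ _ hx hy =>
      intro r s
      rw [AddMonoidAlgebra.coeff_mul]
      refine sum_mem fun p _ => sum_mem fun q _ => ?_
      beta_reduce
      split_ifs with h
      · have := IJ_mul_le I J _ _ _ _ (Ideal.mul_mem_mul (hx p.1 p.2) (hy q.1 q.2))
        rw [Prod.ext_iff] at h
        simp only [Prod.fst_add, Prod.snd_add] at h
        rwa [h.1, h.2] at this
      · exact zero_mem _
  · intro h
    rw [amb_eq_sum f]
    exact sum_mem fun p _ => mono_mem_extRees (h p.1 p.2)

theorem mono_mem_extRees_iff {I J : Ideal R} {r s : ℤ} {c : R} :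
    mono r s c ∈ extRees I J ↔ c ∈ IJ I J r s :=
  ⟨fun h => by simpa [mono_coeff_self] using mem_extRees_iff.mp h r s, mono_mem_extRees⟩

theorem isNoetherianRing_extRees [IsNoetherianRing R] (I J : Ideal R) :
    IsNoetherianRing (extRees I J) := by
  obtain ⟨tI, hI⟩ := IsNoetherian.noetherian I
  obtain ⟨tJ, hJ⟩ := IsNoetherian.noetherian J
  apply isNoetherianRing_of_fg
  let g : Set (Amb R) := (mono 1 0 '' (tI : Set R)) ∪ (mono 0 1 '' (tJ : Set R)) ∪
    {mono (-1) 0 1, mono 0 (-1) 1}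
  refine Subalgebra.fg_def.mpr ⟨g, (((tI.finite_toSet.image _).union
    (tJ.finite_toSet.image _)).union (by simp)), le_antisymm ?_ ?_⟩
  · refine Algebra.adjoin_mono ?_
    rintro x ((⟨a, ha, rfl⟩ | ⟨a, ha, rfl⟩) | hx)
    · exact Or.inl (Or.inl ⟨a, hI ▸ Submodule.subset_span ha, rfl⟩)
    · exact Or.inl (Or.inr ⟨a, hJ ▸ Submodule.subset_span ha, rfl⟩)
    · exact Or.inr hx
  · have hs : ∀ (r s : ℤ) (a b : R), mono r s (a • b) = a • mono r s b := by
      intro r s a b; simp [mono]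
    refine Algebra.adjoin_le ?_
    rintro x ((⟨a, ha, rfl⟩ | ⟨a, ha, rfl⟩) | hx)
    · rw [← hI] at ha
      induction ha using Submodule.span_induction with
      | mem x hx => exact Algebra.subset_adjoin (Or.inl (Or.inl ⟨x, hx, rfl⟩))
      | zero => rw [mono_zero]; exact zero_mem _
      | add x y _ _ hx hy => rw [mono_add]; exact add_mem hx hy
      | smul a x _ hx => rw [hs]; exact Subalgebra.smul_mem _ hx a
    · rw [← hJ] at ha
      induction ha using Submodule.span_induction with
      | mem x hx => exact Algebra.subset_adjoin (Or.inl (Or.inr ⟨x, hx, rfl⟩))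
      | zero => rw [mono_zero]; exact zero_mem _
      | add x y _ _ hx hy => rw [mono_add]; exact add_mem hx hy
      | smul a x _ hx => rw [hs]; exact Subalgebra.smul_mem _ hx a
    · exact Algebra.subset_adjoin (Or.inr hx)

/-! ### Integrality of monomials -/

theorem mem_extReesBar_iff {I J : Ideal R} {f : Amb R} :
    f ∈ extReesBar I J ↔ IsIntegral (extRees I J) f := Iff.rfl

theorem mem_range_iff {I J : Ideal R} {f : Amb R} :
    f ∈ (algebraMap (extRees I J) (Amb R)).range ↔ f ∈ extRees I J :=
  ⟨fun ⟨x, hx⟩ => hx ▸ x.2, fun h => ⟨⟨f, h⟩, rfl⟩⟩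

/-- The element `u₁u₂ = t₁⁻¹t₂⁻¹` of the extended Rees ring. Inverting it gives the whole Laurent
polynomial ring. -/
noncomputable def uu (I J : Ideal R) : extRees I J :=
  ⟨mono (-1) (-1) 1, mono_mem_extRees (by simp [IJ])⟩

theorem algebraMap_uu_pow (I J : Ideal R) (N : ℕ) :
    algebraMap (extRees I J) (Amb R) (uu I J) ^ N = mono (-N) (-N) 1 := by
  change mono (-1) (-1) 1 ^ N = _
  rw [mono_pow]; simp

theorem mono_mem_nonZeroDivisors {g : R} (hg : g ∈ nonZeroDivisors R) (r s : ℤ) :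
    mono r s g ∈ nonZeroDivisors (Amb R) := by
  rw [mem_nonZeroDivisors_iff_left]
  intro z hz
  ext ⟨r', s'⟩
  have h := coeff_mono_mul r s g z r' s'
  rw [hz] at h
  simpa using (mem_nonZeroDivisors_iff_left.mp hg _ h.symm)

theorem uu_mem_nonZeroDivisors (I J : Ideal R) :
    algebraMap (extRees I J) (Amb R) (uu I J) ∈ nonZeroDivisors (Amb R) :=
  mono_mem_nonZeroDivisors (one_mem _) _ _

theorem exists_uu_pow_mul_mem (I J : Ideal R) (z : Amb R) :
    ∃ N : ℕ, algebraMap (extRees I J) (Amb R) (uu I J) ^ N * z ∈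
      (algebraMap (extRees I J) (Amb R)).range := by
  induction z using AddMonoidAlgebra.induction_linear with
  | zero => exact ⟨0, by simp⟩
  | add x y hx hy =>
    obtain ⟨N, hN⟩ := hx
    obtain ⟨N', hN'⟩ := hy
    refine ⟨N + N', ?_⟩
    rw [mul_add]
    refine add_mem ?_ ?_
    · rw [pow_add, mul_comm (_ ^ N), mul_assoc]
      exact mul_mem (pow_mem (RingHom.mem_range_self _ _) _) hN
    · rw [pow_add, mul_assoc]
      exact mul_mem (pow_mem (RingHom.mem_range_self _ _) _) hN'
  | single p c =>
    refine ⟨p.1.toNat + p.2.toNat, ?_⟩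
    rw [algebraMap_uu_pow, mem_range_iff]
    change mono _ _ _ * mono p.1 p.2 c ∈ _
    rw [mono_mul, mono_mem_extRees_iff, IJ, Int.toNat_of_nonpos (by push_cast; omega),
      Int.toNat_of_nonpos (by push_cast; omega)]
    simp

/-- Almost integrality criterion for monomials, with a nonzerodivisor of `R` as denominator. -/
theorem mono_mem_extReesBar_of_mul_pow_mem [IsNoetherianRing R] {I J : Ideal R} {r s : ℤ} {c g : R}
    (hg : g ∈ nonZeroDivisors R) (h : ∀ m : ℕ, g * c ^ m ∈ IJ I J r s ^ m) :
    mono r s c ∈ extReesBar I J := by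
  have := isNoetherianRing_extRees I J
  refine isIntegral_of_mul_pow_mem (mono_mem_nonZeroDivisors hg 0 0) fun m => ?_
  rw [mem_range_iff, mono_pow, mono_mul, mono_mem_extRees_iff, zero_add, zero_add, IJ_nat_mul]
  exact h m

/-- Almost integrality criterion for monomials, with `(u₁u₂)^N` as denominator. The converse is
`exists_pow_mem_of_mono_mem_extReesBar`. -/
theorem mono_mem_extReesBar_of_pow_mem [IsNoetherianRing R] {I J : Ideal R} {r s : ℤ} {c : R}
    {N : ℕ} (h : ∀ m : ℕ, c ^ m ∈ IJ I J (-N + m * r) (-N + m * s)) :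
    mono r s c ∈ extReesBar I J := by
  have := isNoetherianRing_extRees I J
  refine isIntegral_of_mul_pow_mem (pow_mem (uu_mem_nonZeroDivisors I J) N) fun m => ?_
  rw [mem_range_iff, algebraMap_uu_pow, mono_pow, mono_mul, mono_mem_extRees_iff, one_mul]
  exact h m

/-- The powers of an integral element have a common denominator `(u₁u₂)^N`. -/
theorem exists_mono_mul_pow_mem {I J : Ideal R} {f : Amb R} (hf : f ∈ extReesBar I J) :
    ∃ N : ℕ, ∀ m : ℕ, mono (-N) (-N) 1 * f ^ m ∈ extRees I J := by
  obtain ⟨N, hN⟩ := exists_pow_mul_mem_range_of_mem_adjoin (A := extRees I J) (L := Amb R)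
    (uu I J) (exists_uu_pow_mul_mem I J) (Set.finite_singleton f) (fun z hz => by
      rw [Set.mem_singleton_iff.mp hz]; exact mem_extReesBar_iff.mp hf)
  refine ⟨N, fun m => ?_⟩
  have h1 := hN (f ^ m) (pow_mem (Algebra.subset_adjoin (Set.mem_singleton f)) m)
  rw [algebraMap_uu_pow] at h1
  exact mem_range_iff.mp h1

theorem exists_pow_mem_of_mono_mem_extReesBar {I J : Ideal R} {r s : ℤ} {c : R}
    (h : mono r s c ∈ extReesBar I J) :
    ∃ N : ℕ, ∀ m : ℕ, c ^ m ∈ IJ I J (-N + m * r) (-N + m * s) := by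
  obtain ⟨N, hN⟩ := exists_mono_mul_pow_mem h
  refine ⟨N, fun m => ?_⟩
  simpa only [mono_pow, mono_mul, mono_mem_extRees_iff, one_mul] using hN m

/-- Exchanging `t₁` and `t₂` takes the monomials of `extReesBar I J` to those of `extReesBar J I`. -/
theorem mono_mem_extReesBar_swap [IsNoetherianRing R] {I J : Ideal R} {r s : ℤ} {c : R}
    (h : mono r s c ∈ extReesBar I J) : mono s r c ∈ extReesBar J I := by
  obtain ⟨N, hN⟩ := exists_pow_mem_of_mono_mem_extReesBar h
  exact mono_mem_extReesBar_of_pow_mem (N := N) fun m => by rw [IJ_swap]; exact hN m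

/-! ### The integral closure is bigraded -/

/-- If `p` bounds the support of `f` in the lexicographic order, then `m • p` bounds the support of
`f ^ m`, and the coefficient there is the `m`-th power of that of `f` at `p`, even when `R` has
zero divisors. -/
theorem coeff_pow_of_isMax (f : Amb R) (p : ℤ × ℤ)
    (hp : ∀ q, f.coeff q ≠ 0 → toLex q ≤ toLex p) (m : ℕ) :
    (f ^ m).coeff (m • p) = f.coeff p ^ m ∧
      ∀ q, (f ^ m).coeff q ≠ 0 → toLex q ≤ toLex (m • p) := by
  classical
  induction m with
  | zero =>
    constructor
    · simp [AddMonoidAlgebra.one_def]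
    · intro q hq
      rw [pow_zero, AddMonoidAlgebra.one_def, AddMonoidAlgebra.coeff_single, Finsupp.single_apply] at hq
      split_ifs at hq with h
      · rw [← h, zero_smul]
      · exact absurd rfl hq
  | succ m ih =>
    obtain ⟨ih1, ih2⟩ := ih
    constructor
    · rw [pow_succ, succ_nsmul, pow_succ, ← ih1]
      apply AddMonoidAlgebra.coeff_mul_add_of_uniqueAdd
      intro a b ha hb hab
      have ha' := ih2 a (by simpa using ha)
      have hb' := hp b (by simpa using hb)
      have h1 : toLex a + toLex b = toLex (m • p) + toLex p := congrArg toLex hab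
      have h2 := (add_eq_add_iff_eq_and_eq ha' hb').mp h1
      exact ⟨toLex.injective h2.1, toLex.injective h2.2⟩
    · intro q hq
      rw [pow_succ] at hq
      have := AddMonoidAlgebra.support_coeff_mul_subset (f ^ m) f (Finsupp.mem_support_iff.mpr hq)
      obtain ⟨a, ha, b, hb, rfl⟩ := Finset.mem_add.mp this
      have ha' := ih2 a (by simpa using ha)
      have hb' := hp b (by simpa using hb)
      rw [succ_nsmul]
      exact add_le_add ha' hb'

/-- The integral closure of the extended Rees ring is bigraded. The lexicographically leading term of
`f` is integral by the almost integrality criterion, since the leading term of `f ^ m` is its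
`m`-th power; subtracting it gives an element with smaller support. -/
theorem mono_coeff_mem_extReesBar [IsNoetherianRing R] {I J : Ideal R} {f : Amb R}
    (hf : f ∈ extReesBar I J) (r s : ℤ) : mono r s (f.coeff (r, s)) ∈ extReesBar I J := by
  classical
  induction hn : f.coeff.support.card using Nat.strong_induction_on generalizing f with
  | _ n ih =>
    by_cases h0 : f = 0
    · rw [h0]; simp [mono_zero]
    have hne : f.coeff.support.Nonempty := by
      rwa [Finsupp.support_nonempty_iff, Ne, AddMonoidAlgebra.coeff_eq_zero]
    obtain ⟨p, hp, hmax⟩ := Finset.exists_max_image f.coeff.support toLex hne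
    have hmax' : ∀ q, f.coeff q ≠ 0 → toLex q ≤ toLex p := fun q hq =>
      hmax q (Finsupp.mem_support_iff.mpr hq)
    obtain ⟨N, hN⟩ := exists_mono_mul_pow_mem hf
    have htop : mono p.1 p.2 (f.coeff p) ∈ extReesBar I J := by
      refine mono_mem_extReesBar_of_pow_mem (N := N) fun m => ?_
      have h1 := mem_extRees_iff.mp (hN m) (-N + m * p.1) (-N + m * p.2)
      rw [coeff_mono_mul, one_mul] at h1
      have h2 := (coeff_pow_of_isMax f p hmax' m).1
      have h3 : m • p = ((m : ℤ) * p.1, (m : ℤ) * p.2) := by ext <;> simp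
      rw [h3] at h2
      rwa [h2] at h1
    by_cases hrs : (r, s) = p
    · rw [hrs]; convert htop using 2 <;> simp [← hrs]
    have herase : f.erase p ∈ extReesBar I J := by
      have : f.erase p = f - mono p.1 p.2 (f.coeff p) :=
        eq_sub_of_add_eq (AddMonoidAlgebra.erase_add_single p f)
      rw [this]; exact sub_mem hf htop
    have := ih _ (by
      rw [← hn, AddMonoidAlgebra.coeff_erase, Finsupp.support_erase]
      exact Finset.card_erase_lt_of_mem hp) herase rfl
    rwa [AddMonoidAlgebra.coeff_erase, Finsupp.erase_ne hrs] at this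

/-! ### The cancellation property -/

/-- The cancellation property for a monomial `c t₁^r t₂^s`: if its products with `u₁` and with all of
`I t₁` are integral, then so is the monomial. For `r < 0` the product with `u₁` already suffices,
as `I^r` and `I^(r-1)` are both the unit ideal; for `r ≥ 0` this is
`exists_mul_pow_mem_pow_of_cancel` with `K = I^r J^s`. -/
theorem mono_cancel [IsNoetherianRing R] {I J : Ideal R} {f : R} (hf : f ∈ nonZeroDivisors R)
    (hfIJ : f ∈ I * J) {r s : ℤ} {c : R} (hu : mono (r - 1) s c ∈ extReesBar I J)
    (h : ∀ b ∈ I, mono (r + 1) s (b * c) ∈ extReesBar I J) : mono r s c ∈ extReesBar I J := by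
  rcases lt_or_ge r 0 with hr | hr
  · obtain ⟨N, hN⟩ := exists_pow_mem_of_mono_mem_extReesBar hu
    refine mono_mem_extReesBar_of_pow_mem (N := N) fun m => IJ_anti I J ?_ le_rfl (hN m)
    have : (m : ℤ) * r ≤ 0 := mul_nonpos_of_nonneg_of_nonpos (by positivity) hr.le
    omega
  obtain ⟨t, ht⟩ := IsNoetherian.noetherian I
  obtain ⟨N, hN⟩ := exists_pow_mul_mem_range_of_mem_adjoin (uu I J) (exists_uu_pow_mul_mem I J)
    (s := (fun b : R => mono (r + 1) s (b * c)) '' t) (t.finite_toSet.image _) (by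
      rintro _ ⟨b, hb, rfl⟩
      exact h b (ht ▸ Submodule.subset_span hb))
  set Q := Algebra.adjoin (extRees I J) ((fun b : R => mono (r + 1) s (b * c)) '' (t : Set R))
    with hQ
  have h1 : ∀ b ∈ I, mono (r + 1) s (b * c) ∈ Q := by
    intro b hb
    rw [← ht] at hb
    induction hb using Submodule.span_induction with
    | mem x hx => exact Algebra.subset_adjoin ⟨x, hx, rfl⟩
    | zero => rw [zero_mul, mono_zero]; exact zero_mem _
    | add x y _ _ hx hy => rw [add_mul, mono_add]; exact add_mem hx hy
    | smul a x _ hx =>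
      have h0 : mono 0 0 a ∈ Q :=
        Q.algebraMap_mem (⟨mono 0 0 a, (extRees I J).algebraMap_mem a⟩ : extRees I J)
      have := mul_mem h0 hx
      rwa [mono_mul, zero_add, zero_add, ← mul_assoc] at this
  have h2 : ∀ (m : ℕ), ∀ b ∈ I ^ m, mono (m * (r + 1)) (m * s) (b * c ^ m) ∈ Q := by
    intro m
    induction m with
    | zero =>
      intro b _
      have h0 : mono 0 0 b ∈ Q :=
        Q.algebraMap_mem (⟨mono 0 0 b, (extRees I J).algebraMap_mem b⟩ : extRees I J)
      simpa using h0
    | succ m ih =>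
      intro b hb
      rw [pow_succ] at hb
      induction hb using Submodule.mul_induction_on' with
      | mem_mul_mem x hx y hy =>
        have := mul_mem (ih x hx) (h1 y hy)
        rw [mono_mul] at this
        convert this using 1
        congr 1 <;> push_cast <;> ring
      | add x _ y _ hx hy => rw [add_mul, mono_add]; exact add_mem hx hy
  have hIJ1 : IJ I J (r + 1) s = I * IJ I J r s := by
    unfold IJ
    rw [show (r + 1).toNat = r.toNat + 1 by omega, pow_succ']
    ring
  have h3 : ∀ m : ℕ, ∀ b ∈ I ^ m, f ^ N * (b * c ^ m) ∈ (I * IJ I J r s) ^ m := by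
    intro m b hb
    have h4 := hN _ (h2 m b hb)
    rw [mem_range_iff, algebraMap_uu_pow, mono_mul, mono_mem_extRees_iff, one_mul] at h4
    have h5 : f ^ N ∈ IJ I J N N := by
      simp only [IJ, Int.toNat_natCast, ← mul_pow]
      exact Ideal.pow_mem_pow hfIJ N
    have h6 := IJ_mul_le I J _ _ _ _ (Ideal.mul_mem_mul h5 h4)
    rw [← hIJ1, ← IJ_nat_mul]
    simpa using h6
  obtain ⟨g, hg, hgm⟩ := exists_mul_pow_mem_pow_of_cancel I (IJ I J r s) (pow_mem hf N) hf
    (Ideal.mul_le_left hfIJ) ⟨r.toNat + s.toNat, by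
      rw [pow_add]
      exact Ideal.mul_mem_mul (Ideal.pow_mem_pow (Ideal.mul_le_left hfIJ) _)
        (Ideal.pow_mem_pow (Ideal.mul_le_right hfIJ) _)⟩ h3
  exact mono_mem_extReesBar_of_mul_pow_mem hg hgm

theorem mem_extReesBar_of_coeff {I J : Ideal R} {q : Amb R}
    (h : ∀ r s : ℤ, mono r s (q.coeff (r, s)) ∈ extReesBar I J) : q ∈ extReesBar I J := by
  rw [amb_eq_sum q]
  exact sum_mem fun p _ => h p.1 p.2

theorem cancel_left [IsNoetherianRing R] {I J : Ideal R} {f : R} (hf : f ∈ nonZeroDivisors R)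
    (hfIJ : f ∈ I * J) {q : Amb R} (hu : mono (-1) 0 1 * q ∈ extReesBar I J)
    (h : ∀ b ∈ I, mono 1 0 b * q ∈ extReesBar I J) : q ∈ extReesBar I J := by
  refine mem_extReesBar_of_coeff fun r s => mono_cancel hf hfIJ ?_ fun b hb => ?_
  · have := mono_coeff_mem_extReesBar hu (-1 + r) (0 + s)
    rwa [coeff_mono_mul, one_mul, zero_add, neg_add_eq_sub] at this
  · have := mono_coeff_mem_extReesBar (h b hb) (1 + r) (0 + s)
    rwa [coeff_mono_mul, zero_add, add_comm 1 r] at this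

theorem cancel_right [IsNoetherianRing R] {I J : Ideal R} {f : R} (hf : f ∈ nonZeroDivisors R)
    (hfIJ : f ∈ I * J) {q : Amb R} (hu : mono 0 (-1) 1 * q ∈ extReesBar I J)
    (h : ∀ b ∈ J, mono 0 1 b * q ∈ extReesBar I J) : q ∈ extReesBar I J := by
  refine mem_extReesBar_of_coeff fun r s => mono_mem_extReesBar_swap
    (mono_cancel hf (mul_comm I J ▸ hfIJ) ?_ fun b hb => ?_)
  · have := mono_coeff_mem_extReesBar hu (0 + r) (-1 + s)
    rw [coeff_mono_mul, one_mul, zero_add, neg_add_eq_sub] at this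
    exact mono_mem_extReesBar_swap this
  · have := mono_coeff_mem_extReesBar (h b hb) (0 + r) (1 + s)
    rw [coeff_mono_mul, zero_add, add_comm 1 s] at this
    exact mono_mem_extReesBar_swap this

/-! ### Passage to the associated graded ring -/

theorem mk_mem_nonZeroDivisors_of_forall {B : Type*} [CommRing B] {u x : B}
    (h : ∀ b c : B, b * u = x * c → ∃ w, w * u = c) :
    Ideal.Quotient.mk (Ideal.span {u}) x ∈ nonZeroDivisors (B ⧸ Ideal.span {u}) := by
  refine mem_nonZeroDivisors_iff_left.mpr fun z hz => ?_
  obtain ⟨c, rfl⟩ := Ideal.Quotient.mk_surjective z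
  rw [← map_mul, Ideal.Quotient.eq_zero_iff_mem, Ideal.mem_span_singleton'] at hz
  obtain ⟨b, hb⟩ := hz
  rw [Ideal.Quotient.eq_zero_iff_mem, Ideal.mem_span_singleton']
  exact h b c hb

/-- `exists_regular_of_cancellation` for the extended Rees ring, read in the quotient by an element `u`
that is invertible in the Laurent polynomial ring: `x` is a nonzerodivisor modulo `u` because
`x c = u b` says that `x` carries `u⁻¹ c` into `extReesBar I J`. -/
theorem exists_nonZeroDivisor_of_cancel [IsNoetherianRing R] {I J : Ideal R} {u v : Amb R}
    (hu : u ∈ extRees I J) (hu' : u ∈ extReesBar I J) (huv : u * v = 1)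
    (G : Set (Amb R)) (hG : G ⊆ extRees I J) (𝔓 : Ideal (extReesBar I J))
    (hG𝔓 : ∀ g : extReesBar I J, (g : Amb R) ∈ G → g ∈ 𝔓)
    (hcancel : ∀ q : Amb R, u * q ∈ extReesBar I J → (∀ g ∈ G, g * q ∈ extReesBar I J) →
      q ∈ extReesBar I J) :
    ∃ x ∈ Ideal.map (Ideal.Quotient.mk (Ideal.span {(⟨u, hu'⟩ : extReesBar I J)})) 𝔓,
      x ∈ nonZeroDivisors (extReesBar I J ⧸ Ideal.span {(⟨u, hu'⟩ : extReesBar I J)}) := by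
  have := isNoetherianRing_extRees I J
  obtain ⟨x, hxG, hx⟩ := exists_regular_of_cancellation (A := extRees I J) (L := Amb R)
    (fun _ _ h => Subtype.ext h) (uu I J) (uu_mem_nonZeroDivisors I J) (exists_uu_pow_mul_mem I J)
    ⟨u, hu⟩ {g | (g : Amb R) ∈ G}
    (fun q h1 h2 => hcancel q h1 fun g hg => h2 ⟨g, hG hg⟩ hg)
  let ι : extRees I J →+* extReesBar I J :=
    (Subalgebra.inclusion (fun _ h => mem_extReesBar_of_mem_extRees h)).toRingHom
  have hι : ∀ a, ((ι a : extReesBar I J) : Amb R) = a := fun a => rfl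
  have hx𝔓 : ι x ∈ 𝔓 := by
    have : Ideal.span {g : extRees I J | (g : Amb R) ∈ G} ≤ 𝔓.comap ι :=
      Ideal.span_le.mpr fun g hg => hG𝔓 _ hg
    exact this hxG
  refine ⟨Ideal.Quotient.mk _ (ι x), Ideal.mem_map_of_mem _ hx𝔓,
    mk_mem_nonZeroDivisors_of_forall fun b c hb => ?_⟩
  have hb' : (b : Amb R) * u = x * c := congrArg Subtype.val hb
  have hw : v * (c : Amb R) ∈ extReesBar I J := by
    refine mem_extReesBar_iff.mpr (hx (v * c) ?_ ?_)
    · rw [Subalgebra.smul_def, smul_eq_mul, ← mul_assoc, huv, one_mul]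
      exact mem_extReesBar_iff.mp c.2
    · rw [Subalgebra.smul_def, smul_eq_mul, mul_left_comm, ← hb', mul_left_comm, mul_comm v, huv,
        mul_one]
      exact mem_extReesBar_iff.mp b.2
  refine ⟨⟨_, hw⟩, Subtype.ext ?_⟩
  change v * (c : Amb R) * u = c
  rw [mul_right_comm, mul_comm v, huv, one_mul]

end Concrete

/-- The first element of a system of parameters that is a regular sequence has powers in `I` and `J`. -/
theorem exists_nonZeroDivisor_mem_mul {R : Type*} [CommRing R] [IsLocalRing R]
    (hCM : IsCMLocalRing R) (hdim : ringKrullDim R = 2) {I J : Ideal R}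
    (hI : IsMPrimary I) (hJ : IsMPrimary J) : ∃ f ∈ nonZeroDivisors R, f ∈ I * J := by
  obtain ⟨n, f, hfm, ⟨hreg, -⟩, hn⟩ := hCM
  have hn2 : n = 2 := by rw [hdim] at hn; exact_mod_cast hn
  subst hn2
  have h0 : f 0 ∈ nonZeroDivisors R := by
    rw [mem_nonZeroDivisors_iff_left]
    intro z hz
    have := hreg 0 z (by rw [show f 0 • z = 0 from hz]; exact zero_mem _)
    simpa using this
  obtain ⟨k, hk⟩ : f 0 ∈ I.radical := hI ▸ hfm 0
  obtain ⟨l, hl⟩ : f 0 ∈ J.radical := hJ ▸ hfm 0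
  exact ⟨f 0 ^ k * f 0 ^ l, mul_mem (pow_mem h0 k) (pow_mem h0 l), Ideal.mul_mem_mul hk hl⟩

/-- Theorem 2.5.  Let `(R,𝔪)` be an analytically unramified
Cohen-Macaulay local ring of dimension `2` with infinite residue field and `I`, `J`
`𝔪`-primary ideals.  Then `grade (\overline{𝓡'}(I,J|I)₁⁺) ≥ 1` and
`grade (\overline{𝓡'}(I,J|J)₂⁺) ≥ 1`, i.e. each of these ideals contains a
nonzerodivisor. -/
theorem grade_pos_extAssocGraded
    (R : Type*) [CommRing R] [IsLocalRing R] [IsNoetherianRing R]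
    (hur : AnalyticallyUnramified R) (hCM : IsCMLocalRing R)
    (hdim : ringKrullDim R = 2) (hres : Infinite (IsLocalRing.ResidueField R))
    (I J : Ideal R) (hI : IsMPrimary I) (hJ : IsMPrimary J) :
    (∃ x ∈ Ideal.map
        (Ideal.Quotient.mk (Ideal.span {(⟨mono (-1) 0 1, u1_mem I J⟩ : ↥(extReesBar I J))}))
        (plusIdeal1 (extReesBar I J)),
      x ∈ nonZeroDivisors (extAssocGradedI I J)) ∧
    (∃ x ∈ Ideal.map
        (Ideal.Quotient.mk (Ideal.span {(⟨mono 0 (-1) 1, u2_mem I J⟩ : ↥(extReesBar I J))}))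
        (plusIdeal2 (extReesBar I J)),
      x ∈ nonZeroDivisors (extAssocGradedJ I J)) := by
  obtain ⟨f, hf, hfIJ⟩ := exists_nonZeroDivisor_mem_mul hCM hdim hI hJ
  constructor
  · refine exists_nonZeroDivisor_of_cancel (v := mono 1 0 1)
      (mono_mem_extRees (by simp [IJ])) _ (by rw [mono_mul, mul_one]; rfl)
      {g | ∃ b ∈ I, g = mono 1 0 b} ?_ _ ?_ ?_
    · rintro _ ⟨b, hb, rfl⟩
      exact mono_mem_extRees (by simpa [IJ] using hb)
    · rintro g ⟨b, _, hg⟩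
      exact Ideal.subset_span ⟨1, 0, le_rfl, b, hg⟩
    · exact fun q hu h => cancel_left hf hfIJ hu fun b hb => h _ ⟨b, hb, rfl⟩
  · refine exists_nonZeroDivisor_of_cancel (v := mono 0 1 1)
      (mono_mem_extRees (by simp [IJ])) _ (by rw [mono_mul, mul_one]; rfl)
      {g | ∃ b ∈ J, g = mono 0 1 b} ?_ _ ?_ ?_
    · rintro _ ⟨b, hb, rfl⟩
      exact mono_mem_extRees (by simpa [IJ] using hb)
    · rintro g ⟨b, _, hg⟩
      exact Ideal.subset_span ⟨0, 1, le_rfl, b, hg⟩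
    · exact fun q hu h => cancel_right hf hfIJ hu fun b hb => h _ ⟨b, hb, rfl⟩
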